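/- arXiv:1609.00966 — 2 statements merged into one kernel-verified Lean document; each statement's English description precedes it below -/
import Mathlib

section
/- Assume 𝔄 : H₋ × H₋ → ℝ is differentiable. Fix θ*, θ ∈ H₊ and for φ*, φ ∈ H₋ set ψ̃* = (b·Q*Q + 𝔔)⁻¹ (b·Q*θ* + 𝔔 Q₋ φ*) and ψ̃ = (b·Q*Q + 𝔔)⁻¹ (b·Q*θ + 𝔔 Q₋ φ). Then the gradient with respect to the second H₋-variable of the map (φ*, φ) ↦ Ǎ(θ*, θ; φ*, φ) at (φ*, φ) equals the gradient with respect to the second H₋-variable of the map (φ*, φ) ↦ 𝒜(ψ̃*, ψ̃; φ*, φ) (with ψ̃*, ψ̃ held fixed at their values at (φ*, φ)) plus Q₋* 𝔔 (b·Q*Q + 𝔔)⁻¹ applied to the gradient with respect to the variable ψ of the map (ψ*, ψ) ↦ 𝒜_eff(θ*, θ; ψ*, ψ; φ*, φ) evaluated at (ψ̃*, ψ̃). -/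
open RealInnerProductSpace

theorem aux_isUnit {E : Type*} [NormedAddCommGroup E] [InnerProductSpace ℝ E]
    [FiniteDimensional ℝ E] (T : Module.End ℝ E) (h : ∀ x : E, x ≠ 0 → 0 < ⟪T x, x⟫) :
    IsUnit T := by
  rw [LinearMap.isUnit_iff_ker_eq_bot, LinearMap.ker_eq_bot']
  intro x hx
  by_contra hne
  have := h x hne
  rw [hx, inner_zero_left] at this
  exact lt_irrefl _ this

theorem aux_inv {E : Type*} [NormedAddCommGroup E] [InnerProductSpace ℝ E]
    (T : Module.End ℝ E) (h : IsUnit T) (x : E) :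
    T (Ring.inverse T x) = x ∧ Ring.inverse T (T x) = x := by
  constructor
  · rw [← Module.End.mul_apply, Ring.mul_inverse_cancel _ h, Module.End.one_apply]
  · rw [← Module.End.mul_apply, Ring.inverse_mul_cancel _ h, Module.End.one_apply]

/-- Lemma (preparation), gradient identity:
`∇_φ Ǎ(θ*,θ;φ*,φ) = ∇_φ 𝒜(ψ̃*,ψ̃;φ*,φ) + Q₋* 𝔔 (b Q*Q + 𝔔)⁻¹ [∇_ψ 𝒜_eff(θ*,θ;ψ̃*,ψ̃;φ*,φ)]`. -/
theorem stmt_6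
    {Hm H Hp : Type*}
    [NormedAddCommGroup Hm] [InnerProductSpace ℝ Hm] [FiniteDimensional ℝ Hm]
    [NormedAddCommGroup H] [InnerProductSpace ℝ H] [FiniteDimensional ℝ H]
    [NormedAddCommGroup Hp] [InnerProductSpace ℝ Hp] [FiniteDimensional ℝ Hp]
    (Qm : Hm →ₗ[ℝ] H) (Q : H →ₗ[ℝ] Hp)
    (b : ℝ) (hb : 0 < b)
    (Qf : Module.End ℝ H) (hQfsym : Qf.IsSymmetric)
    (hQfpos : ∀ x : H, x ≠ 0 → 0 < ⟪Qf x, x⟫)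
    (Qfc : Module.End ℝ Hp)
    (hQfc : Qfc = Ring.inverse
      (b⁻¹ • (1 : Module.End ℝ Hp)
        + Q ∘ₗ Ring.inverse Qf ∘ₗ LinearMap.adjoint Q))
    (𝔄 : Hm → Hm → ℝ)
    (h𝔄 : Differentiable ℝ (fun p : Hm × Hm => 𝔄 p.1 p.2))
    (θs θ : Hp) (φs φ : Hm) (ψts ψt : H)
    (hψts : ψts = Ring.inverse (b • (LinearMap.adjoint Q ∘ₗ Q) + Qf)
                    (b • LinearMap.adjoint Q θs + Qf (Qm φs)))
    (hψt : ψt = Ring.inverse (b • (LinearMap.adjoint Q ∘ₗ Q) + Qf)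
                  (b • LinearMap.adjoint Q θ + Qf (Qm φ))) :
    gradient (fun φ' : Hm =>
        ⟪θs - (Q ∘ₗ Qm) φs, Qfc (θ - (Q ∘ₗ Qm) φ')⟫ + 𝔄 φs φ') φ
      = gradient (fun φ' : Hm =>
          ⟪ψts - Qm φs, Qf (ψt - Qm φ')⟫ + 𝔄 φs φ') φ
        + (LinearMap.adjoint Qm ∘ₗ Qf
            ∘ₗ Ring.inverse (b • (LinearMap.adjoint Q ∘ₗ Q) + Qf))
          (gradient (fun ψ' : H =>
            b * ⟪θs - Q ψts, θ - Q ψ'⟫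
              + (⟪ψts - Qm φs, Qf (ψ' - Qm φ)⟫ + 𝔄 φs φ)) ψt) := by
  have hU := aux_isUnit Qf hQfpos
  have hinv := aux_inv Qf hU
  have hinvsym : ∀ x y : H, ⟪Ring.inverse Qf x, y⟫ = ⟪x, Ring.inverse Qf y⟫ := by
    intro x y
    have := hQfsym (Ring.inverse Qf x) (Ring.inverse Qf y)
    rw [(hinv x).1, (hinv y).1] at this
    exact this.symm
  have hinvpos : ∀ x : H, 0 ≤ ⟪Ring.inverse Qf x, x⟫ := by
    intro x
    by_cases h0 : Ring.inverse Qf x = 0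
    · simp [h0]
    · have := hQfpos _ h0
      rw [(hinv x).1, real_inner_comm] at this
      exact this.le
  have hS := aux_isUnit (b • (LinearMap.adjoint Q ∘ₗ Q) + Qf) (by
    intro x hx
    have h1 := hQfpos x hx
    have h2 : 0 ≤ b * ⟪Q x, Q x⟫ := mul_nonneg hb.le real_inner_self_nonneg
    simp only [LinearMap.add_apply, LinearMap.smul_apply, LinearMap.comp_apply, inner_add_left,
      real_inner_smul_left, LinearMap.adjoint_inner_left]
    linarith)
  have hKapp : ∀ x : Hp, (b⁻¹ • (1 : Module.End ℝ Hp)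
        + Q ∘ₗ Ring.inverse Qf ∘ₗ LinearMap.adjoint Q) x
        = b⁻¹ • x + Q (Ring.inverse Qf (LinearMap.adjoint Q x)) := fun x => rfl
  have hK := aux_isUnit (b⁻¹ • (1 : Module.End ℝ Hp)
        + Q ∘ₗ Ring.inverse Qf ∘ₗ LinearMap.adjoint Q) (by
    intro x hx
    rw [hKapp, inner_add_left, real_inner_smul_left, ← LinearMap.adjoint_inner_right]
    have h1 : 0 < b⁻¹ * ⟪x, x⟫ := mul_pos (inv_pos.mpr hb) (real_inner_self_pos.mpr hx)
    have h2 := hinvpos (LinearMap.adjoint Q x)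
    linarith)
  have hKsym : ∀ x y : Hp, ⟪(b⁻¹ • (1 : Module.End ℝ Hp)
        + Q ∘ₗ Ring.inverse Qf ∘ₗ LinearMap.adjoint Q) x, y⟫ = ⟪x, (b⁻¹ • (1 : Module.End ℝ Hp)
        + Q ∘ₗ Ring.inverse Qf ∘ₗ LinearMap.adjoint Q) y⟫ := by
    intro x y
    rw [hKapp, hKapp, inner_add_left, inner_add_right, real_inner_smul_left,
      real_inner_smul_right, ← LinearMap.adjoint_inner_right, hinvsym,
      LinearMap.adjoint_inner_left]
  have hcrit : b • LinearMap.adjoint Q (Q ψts) + Qf ψts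
      = b • LinearMap.adjoint Q θs + Qf (Qm φs) := by
    have := (aux_inv _ hS (b • LinearMap.adjoint Q θs + Qf (Qm φs))).1
    rw [← hψts] at this
    exact this
  have hw : Qf (ψts - Qm φs) = LinearMap.adjoint Q (b • (θs - Q ψts)) := by
    rw [map_sub, map_smul, map_sub, smul_sub, sub_eq_sub_iff_add_eq_add, add_comm, hcrit]
  have hu : (b⁻¹ • (1 : Module.End ℝ Hp)
        + Q ∘ₗ Ring.inverse Qf ∘ₗ LinearMap.adjoint Q) (b • (θs - Q ψts))
        = θs - (Q ∘ₗ Qm) φs := by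
    rw [hKapp, ← hw, (hinv _).2, smul_smul, inv_mul_cancel₀ hb.ne', one_smul, map_sub,
      LinearMap.comp_apply]
    abel
  have hL : ∀ y : Hp, ⟪θs - (Q ∘ₗ Qm) φs, Qfc y⟫ = ⟪b • (θs - Q ψts), y⟫ := by
    intro y
    rw [← hu, hKsym, hQfc, (aux_inv _ hK y).1]
  have hR : ∀ y : H, ⟪ψts - Qm φs, Qf y⟫ = ⟪b • (θs - Q ψts), Q y⟫ := by
    intro y
    rw [← hQfsym, hw, LinearMap.adjoint_inner_left]
  have e1 : (fun ψ' : H => b * ⟪θs - Q ψts, θ - Q ψ'⟫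
              + (⟪ψts - Qm φs, Qf (ψ' - Qm φ)⟫ + 𝔄 φs φ))
      = fun _ => ⟪b • (θs - Q ψts), θ - Q (Qm φ)⟫ + 𝔄 φs φ := by
    funext ψ'
    rw [hR, real_inner_smul_left, real_inner_smul_left, map_sub]
    simp only [inner_sub_right]
    ring
  have e2 : (fun φ' : Hm =>
        ⟪θs - (Q ∘ₗ Qm) φs, Qfc (θ - (Q ∘ₗ Qm) φ')⟫ + 𝔄 φs φ')
      = fun φ' : Hm => (⟪ψts - Qm φs, Qf (ψt - Qm φ')⟫ + 𝔄 φs φ')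
        + ⟪b • (θs - Q ψts), θ - Q ψt⟫ := by
    funext φ'
    rw [hL, hR, map_sub, LinearMap.comp_apply]
    simp only [inner_sub_right]
    ring
  rw [e1, e2]
  simp only [gradient, fderiv_add_const, fderiv_fun_const, Pi.zero_apply, map_zero, add_zero]
end

section
/- Assume in addition that D is invertible and that Δ + b·Q*Q is invertible, where Δ = 𝔔 − 𝔔 Q₋ S Q₋* 𝔔, and set C = (Δ + b·Q*Q)⁻¹. Then b·C·Q* = (b·Q*Q + 𝔔)⁻¹ ( b·Q* + 𝔔 Q₋ Š Q̌₋* 𝔔̌ ), as linear maps from H₊ to H, where S = (D + Q₋*𝔔Q₋)⁻¹ and Š = (D + Q̌₋*𝔔̌Q̌₋)⁻¹. -/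
open RealInnerProductSpace

theorem aux_unit {V : Type*} [NormedAddCommGroup V] [InnerProductSpace ℝ V]
    [FiniteDimensional ℝ V] (A : Module.End ℝ V)
    (h : ∀ x : V, x ≠ 0 → 0 < ⟪A x, x⟫) : IsUnit A := by
  rw [LinearMap.isUnit_iff_ker_eq_bot, LinearMap.ker_eq_bot']
  intro x hx
  by_contra hne
  have := h x hne
  rw [hx, inner_zero_left] at this
  exact lt_irrefl _ this

theorem aux_r {V : Type*} [AddCommGroup V] [Module ℝ V] {A : Module.End ℝ V}
    (h : IsUnit A) (x : V) : A (Ring.inverse A x) = x := by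
  rw [← Module.End.mul_apply, Ring.mul_inverse_cancel _ h, Module.End.one_apply]

theorem aux_l {V : Type*} [AddCommGroup V] [Module ℝ V] {A : Module.End ℝ V}
    (h : IsUnit A) (x : V) : Ring.inverse A (A x) = x := by
  rw [← Module.End.mul_apply, Ring.inverse_mul_cancel _ h, Module.End.one_apply]

/-- Remark, part (e): `b C Q* = (b Q*Q + 𝔔)⁻¹ (b Q* + 𝔔 Q₋ Š Q̌₋* 𝔔̌)`. -/
theorem stmt_18
    {Hm H Hp : Type*}
    [NormedAddCommGroup Hm] [InnerProductSpace ℝ Hm] [FiniteDimensional ℝ Hm]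
    [NormedAddCommGroup H] [InnerProductSpace ℝ H] [FiniteDimensional ℝ H]
    [NormedAddCommGroup Hp] [InnerProductSpace ℝ Hp] [FiniteDimensional ℝ Hp]
    (Qm : Hm →ₗ[ℝ] H) (Q : H →ₗ[ℝ] Hp)
    (b : ℝ) (hb : 0 < b)
    (Qf : Module.End ℝ H) (hQfsym : Qf.IsSymmetric)
    (hQfpos : ∀ x : H, x ≠ 0 → 0 < ⟪Qf x, x⟫)
    (Qfc : Module.End ℝ Hp)
    (hQfc : Qfc = Ring.inverse
      (b⁻¹ • (1 : Module.End ℝ Hp)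
        + Q ∘ₗ Ring.inverse Qf ∘ₗ LinearMap.adjoint Q))
    (D : Module.End ℝ Hm)
    (hDQ : IsUnit (D + LinearMap.adjoint Qm ∘ₗ Qf ∘ₗ Qm))
    (hDQc : IsUnit (D + LinearMap.adjoint (Q ∘ₗ Qm) ∘ₗ Qfc ∘ₗ (Q ∘ₗ Qm)))
    (S : Module.End ℝ Hm)
    (hS : S = Ring.inverse (D + LinearMap.adjoint Qm ∘ₗ Qf ∘ₗ Qm))
    (Sc : Module.End ℝ Hm)
    (hSc : Sc = Ring.inverse (D + LinearMap.adjoint (Q ∘ₗ Qm) ∘ₗ Qfc ∘ₗ (Q ∘ₗ Qm)))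
    (hD : IsUnit D)
    (Δ : Module.End ℝ H)
    (hΔ : Δ = Qf - Qf ∘ₗ Qm ∘ₗ S ∘ₗ LinearMap.adjoint Qm ∘ₗ Qf)
    (hΔb : IsUnit (Δ + b • (LinearMap.adjoint Q ∘ₗ Q)))
    (C : Module.End ℝ H)
    (hC : C = Ring.inverse (Δ + b • (LinearMap.adjoint Q ∘ₗ Q))) :
    b • (C ∘ₗ LinearMap.adjoint Q)
      = Ring.inverse (b • (LinearMap.adjoint Q ∘ₗ Q) + Qf)
          ∘ₗ (b • LinearMap.adjoint Q
              + Qf ∘ₗ Qm ∘ₗ Sc ∘ₗ LinearMap.adjoint (Q ∘ₗ Qm) ∘ₗ Qfc) := by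
  have uF : IsUnit Qf := aux_unit Qf hQfpos
  have uA : IsUnit (b • (LinearMap.adjoint Q ∘ₗ Q) + Qf) := by
    apply aux_unit
    intro x hx
    have h1 := hQfpos x hx
    have h2 : 0 ≤ ⟪Q x, Q x⟫ := real_inner_self_nonneg
    simp only [LinearMap.add_apply, LinearMap.smul_apply, LinearMap.comp_apply, inner_add_left,
      real_inner_smul_left, LinearMap.adjoint_inner_left]
    positivity
  have uB : IsUnit (b⁻¹ • (1 : Module.End ℝ Hp)
        + Q ∘ₗ Ring.inverse Qf ∘ₗ LinearMap.adjoint Q) := by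
    apply aux_unit
    intro x hx
    have h0 : 0 < ⟪x, x⟫ := real_inner_self_pos.2 hx
    have h2 : 0 ≤ ⟪Q (Ring.inverse Qf (LinearMap.adjoint Q x)), x⟫ := by
      rw [← LinearMap.adjoint_inner_right]
      set y := LinearMap.adjoint Q x
      by_cases hy : Ring.inverse Qf y = 0
      · rw [hy, inner_zero_left]
      · have := hQfpos _ hy
        rw [aux_r uF, real_inner_comm] at this
        exact this.le
    simp only [LinearMap.add_apply, LinearMap.smul_apply, LinearMap.comp_apply, inner_add_left,
      real_inner_smul_left, Module.End.one_apply]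
    positivity
  ext y
  set z := (Ring.inverse (b • (LinearMap.adjoint Q ∘ₗ Q) + Qf)
          ∘ₗ (b • LinearMap.adjoint Q
              + Qf ∘ₗ Qm ∘ₗ Sc ∘ₗ LinearMap.adjoint (Q ∘ₗ Qm) ∘ₗ Qfc)) y with hz
  obtain ⟨s, hs⟩ : ∃ s, s = Sc (LinearMap.adjoint (Q ∘ₗ Qm) (Qfc y)) := ⟨_, rfl⟩
  have hAz : b • LinearMap.adjoint Q (Q z) + Qf z = b • LinearMap.adjoint Q y + Qf (Qm s) := by
    have := aux_r uA ((b • LinearMap.adjoint Q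
              + Qf ∘ₗ Qm ∘ₗ Sc ∘ₗ LinearMap.adjoint (Q ∘ₗ Qm) ∘ₗ Qfc) y)
    rw [← LinearMap.comp_apply (Ring.inverse _), ← hz] at this
    simpa [hs] using this
  have hDs : D s + LinearMap.adjoint Qm (LinearMap.adjoint Q (Qfc (Q (Qm s))))
      = LinearMap.adjoint Qm (LinearMap.adjoint Q (Qfc y)) := by
    have := aux_r hDQc (LinearMap.adjoint (Q ∘ₗ Qm) (Qfc y))
    rw [← hSc, ← hs] at this
    simpa only [LinearMap.adjoint_comp, LinearMap.add_apply, LinearMap.comp_apply] using this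
  clear_value z
  obtain ⟨v, hv⟩ : ∃ v, v = b • (y - Q (Qm s) - Q (z - Qm s)) := ⟨_, rfl⟩
  have hFw : Qf (z - Qm s) = LinearMap.adjoint Q v := by
    rw [hv]
    simp only [map_smul, map_sub, smul_sub]
    linear_combination (norm := module) hAz
  have hcu : Qfc (y - Q (Qm s)) = v := by
    rw [hQfc, ← aux_l uB v]
    congr 1
    simp only [LinearMap.add_apply, LinearMap.smul_apply, LinearMap.comp_apply,
      Module.End.one_apply]
    rw [← hFw, aux_l uF, hv, inv_smul_smul₀ hb.ne']
    abel
  have key : s = S (LinearMap.adjoint Qm (Qf z)) := by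
    rw [hS, ← aux_l hDQ s]
    congr 1
    simp only [LinearMap.add_apply, LinearMap.comp_apply, aux_l hDQ]
    have h := congrArg (LinearMap.adjoint Qm) hFw
    rw [← hcu] at h
    simp only [map_sub] at h
    linear_combination (norm := module) hDs - h
  have hfin : (Δ + b • (LinearMap.adjoint Q ∘ₗ Q)) z = b • LinearMap.adjoint Q y := by
    rw [hΔ]
    simp only [LinearMap.add_apply, LinearMap.sub_apply, LinearMap.smul_apply,
      LinearMap.comp_apply]
    rw [← key]
    linear_combination (norm := module) hAz
  rw [LinearMap.smul_apply, LinearMap.comp_apply, ← map_smul, ← hfin, hC, aux_l hΔb]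
end
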